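/- The metric space (Γ(D), δ̄) is complete, and convergence in δ̄ implies narrow convergence of plans. -/

import Mathlib

/-!
Both assertions rest on comparing the action of a curve with the discrete energies
`∑ₖ N |ω((k+1)/N) - ω(k/N)|² / 2` of its restriction to rational times. By Cauchy-Schwarz these
are at most the action (`discEnergy_restr_le`); they are continuous functions on `ℚ → ℝⁿ`, so their
supremum, the `energy`, is lower semicontinuous. Conversely a map `y : ℚ → ℝⁿ` of finite energy is
Hölder continuous on `[0,1] ∩ ℚ`, its continuous extension `pathExt y` is absolutely continuous, and
by Fatou's lemma its action is at most `energy y` (`pathAction_pathExt_le`).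

*Lower semicontinuity of `δ̄`* (`deltaSq_le_of_tendsto`). Let `P k` be generalized flows from `η` to
`γs k` with action at most `c`, where `γs k → γ` narrowly. Their images under restriction to rational
times are concentrated on the compact product `D^ℚ × D`, so by Prokhorov's theorem they converge
along an ultrafilter to a law `Q` on `(ℚ → ℝⁿ) × ℝⁿ`. Marginals pass to the limit, and so does the
bound on the integrated energy. Hence almost every `y` has finite energy, and the image of `Q` under
`pathExt` is a generalized flow from `η` to `γ` of action at most `c`. No narrow topology on the
nonmetrizable space `ℝ → ℝⁿ` is needed.

*Completeness.* The plans live on the compact set `D × D`, so a sequence of plans converges narrowly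
along an ultrafilter on `ℕ`. If the sequence is `δ̄`-Cauchy, lower semicontinuity bounds the distance
from `γs j` to the limit for large `j`.

*Narrow convergence.* If `f` is `L`-Lipschitz and `P` is a flow from `η` to `γ`, then
`|∫ f dη - ∫ f dγ| ≤ L ∫ |ω(1) - ω(0)| dP`, whose square is at most `2 L²` times the action of `P`
(`sq_enorm_integral_sub_le`), and bounded Lipschitz functions determine narrow convergence.

The function `pathAction` is not measurable for the product `σ`-algebra on `ℝ → ℝⁿ`, so `flowAction`
is a lower integral; only monotonicity, constant factors and `lintegral_map_le`, none of which needs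
measurability, are used for it, and every other integrand is measurable.
-/

open MeasureTheory Set Filter
open scoped ENNReal NNReal

noncomputable section


abbrev Euc (n : ℕ) := EuclideanSpace ℝ (Fin n)

/-- A plan in `Γ(D)`: probability measure on `D × D` with both marginals `μD`. -/
def IsPlan {n : ℕ} (μD : Measure (Euc n)) (γ : Measure (Euc n × Euc n)) : Prop :=
  IsProbabilityMeasure γ ∧ γ.map Prod.fst = μD ∧ γ.map Prod.snd = μD

/-- Absolute continuity of a curve on `[0,1]`. -/
def AbsCts {n : ℕ} (ω : ℝ → Euc n) : Prop :=
  IntegrableOn (deriv ω) (Icc (0:ℝ) 1) ∧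
  ∀ t ∈ Icc (0:ℝ) 1, ω t = ω 0 + ∫ s in Ioc (0:ℝ) t, deriv ω s

open Classical in
/-- Kinetic action of a curve: `∫₀¹ ½|ω̇|²` if absolutely continuous, `+∞` otherwise. -/
def pathAction {n : ℕ} (ω : ℝ → Euc n) : ℝ≥0∞ :=
  if _h : AbsCts ω then ∫⁻ t in Icc (0:ℝ) 1, ENNReal.ofReal (‖deriv ω t‖ ^ 2 / 2) else ⊤

/-- Generalized incompressible flow on `[0,1]` connecting the plan `η` to the plan `γ`. -/
def IsGenFlow {n : ℕ} (μD : Measure (Euc n)) (η γ : Measure (Euc n × Euc n))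
    (P : Measure ((ℝ → Euc n) × Euc n)) : Prop :=
  IsProbabilityMeasure P ∧
  (∀ t ∈ Icc (0:ℝ) 1, P.map (fun p => p.1 t) = μD) ∧
  P.map (fun p => (p.1 0, p.2)) = η ∧
  P.map (fun p => (p.1 1, p.2)) = γ

/-- Action of a generalized flow. -/
def flowAction {n : ℕ} (P : Measure ((ℝ → Euc n) × Euc n)) : ℝ≥0∞ :=
  ∫⁻ p, pathAction p.1 ∂P

/-- Squared relaxed distance `δ̄²(η,γ)`. -/
def deltaSq {n : ℕ} (μD : Measure (Euc n)) (η γ : Measure (Euc n × Euc n)) : ℝ≥0∞ :=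
  ⨅ P : {P : Measure ((ℝ → Euc n) × Euc n) // IsGenFlow μD η γ P}, flowAction P.1

end

/-! ### Discrete energies -/

/-- The clamping `ℝ → [0,1]`. -/
def clamp (t : ℝ) : ℝ := max 0 (min t 1)

lemma clamp_mem (t : ℝ) : clamp t ∈ Icc (0:ℝ) 1 := by
  simp [clamp]

lemma clamp_eq {t : ℝ} (ht : t ∈ Icc (0:ℝ) 1) : clamp t = t := by
  simp [clamp, ht.1, ht.2]

/-- Restriction of a curve to rational times, clamped to `[0,1]`. -/
def restr {n : ℕ} (ω : ℝ → Euc n) : ℚ → Euc n := fun q => ω (clamp q)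

/-- Discrete kinetic energy of `y` along the uniform partition of `[0,1]` into `N` intervals. -/
noncomputable def discEnergy {n : ℕ} (N : ℕ) (y : ℚ → Euc n) : ℝ :=
  ∑ k ∈ Finset.range N, (N : ℝ) * ‖y ((k + 1) / N) - y (k / N)‖ ^ 2 / 2

lemma discEnergy_nonneg {n : ℕ} (N : ℕ) (y : ℚ → Euc n) : 0 ≤ discEnergy N y :=
  Finset.sum_nonneg fun _ _ => by positivity

/-- Cauchy-Schwarz against the constant function `1`. -/
lemma sq_lintegral_le {α : Type*} [MeasurableSpace α] (μ : Measure α) (f : α → ℝ≥0∞)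
    (hf : AEMeasurable f μ) : (∫⁻ x, f x ∂μ) ^ 2 ≤ μ univ * ∫⁻ x, f x ^ 2 ∂μ := by
  have h := ENNReal.lintegral_mul_le_Lp_mul_Lq μ Real.HolderConjugate.two_two
    (aemeasurable_const (b := (1:ℝ≥0∞))) hf
  simp only [Pi.mul_apply, one_mul, ENNReal.one_rpow, lintegral_const] at h
  calc (∫⁻ x, f x ∂μ) ^ 2 ≤ (μ univ ^ (1 / 2 : ℝ) * (∫⁻ x, f x ^ 2 ∂μ) ^ (1 / 2 : ℝ)) ^ 2 := by
        gcongr; simpa using h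
    _ = _ := by
      rw [mul_pow, ← ENNReal.rpow_natCast, ← ENNReal.rpow_natCast, ← ENNReal.rpow_mul,
        ← ENNReal.rpow_mul]
      norm_num

/-- The increment of an absolutely continuous curve, estimated by Cauchy-Schwarz. -/
lemma AbsCts.increment_le {n : ℕ} {ω : ℝ → Euc n} (h : AbsCts ω) {a b : ℝ} (ha : 0 ≤ a)
    (hab : a ≤ b) (hb : b ≤ 1) :
    ‖ω b - ω a‖ₑ ^ 2 ≤ ENNReal.ofReal (b - a) * ∫⁻ t in Ioc a b, ‖deriv ω t‖ₑ ^ 2 := by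
  have hI : ∀ {c d : ℝ}, 0 ≤ c → d ≤ 1 → IntegrableOn (deriv ω) (Ioc c d) := fun hc hd =>
    h.1.mono_set fun x hx => ⟨hc.trans hx.1.le, hx.2.trans hd⟩
  have h1 : ω b - ω a = ∫ s in Ioc a b, deriv ω s := by
    rw [h.2 b ⟨ha.trans hab, hb⟩, h.2 a ⟨ha, hab.trans hb⟩, ← Ioc_union_Ioc_eq_Ioc ha hab,
      setIntegral_union (Ioc_disjoint_Ioc_of_le le_rfl) measurableSet_Ioc
        (hI le_rfl (hab.trans hb)) (hI ha hb)]
    abel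
  have h2 : ‖ω b - ω a‖ₑ ≤ ∫⁻ s in Ioc a b, ‖deriv ω s‖ₑ := by
    rw [h1]; exact enorm_integral_le_lintegral_enorm _
  calc ‖ω b - ω a‖ₑ ^ 2 ≤ (∫⁻ s in Ioc a b, ‖deriv ω s‖ₑ) ^ 2 := by gcongr
    _ ≤ _ := by
      refine (sq_lintegral_le _ _ (hI ha hb).aestronglyMeasurable.enorm).trans ?_
      simp

lemma ofReal_half_sq {E : Type*} [NormedAddCommGroup E] (x : E) :
    ENNReal.ofReal (‖x‖ ^ 2 / 2) = ‖x‖ₑ ^ 2 / 2 := by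
  rw [ENNReal.ofReal_div_of_pos two_pos, ENNReal.ofReal_pow (norm_nonneg _), ofReal_norm]
  simp

/-- The discrete energies of an absolutely continuous curve are bounded by its action; for other curves
the action is infinite. -/
lemma discEnergy_restr_le {n : ℕ} (N : ℕ) (ω : ℝ → Euc n) :
    ENNReal.ofReal (discEnergy N (restr ω)) ≤ pathAction ω := by
  by_cases h : AbsCts ω
  swap
  · simp [pathAction, h]
  rcases Nat.eq_zero_or_pos N with rfl | hN
  · simp [discEnergy]
  have hN' : (0:ℝ) < N := by exact_mod_cast hN
  set p : ℕ → ℝ := fun k => (k:ℝ) / N with hp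
  have hmono : Monotone p := fun i j hij => by simp only [hp]; gcongr
  have hstep : ∀ k, p (k+1) - p k = 1 / N := fun k => by simp only [hp]; push_cast; ring
  have hle1 : ∀ k, k ≤ N → p k ≤ 1 := fun k hk => by
    simp only [hp]; rw [div_le_one hN']; exact_mod_cast hk
  have hp0 : ∀ k, 0 ≤ p k := fun k => by positivity
  have hr : ∀ k, k ≤ N → restr ω ((k:ℚ) / N) = ω (p k) := fun k hk => by
    have : (((k:ℚ)/N : ℚ) : ℝ) = p k := by push_cast; rfl
    rw [restr, this, clamp_eq ⟨hp0 k, hle1 k hk⟩]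
  have hterm : ∀ k ∈ Finset.range N,
      ENNReal.ofReal ((N : ℝ) * ‖restr ω ((k + 1) / N) - restr ω (k / N)‖ ^ 2 / 2) ≤
        ∫⁻ t in Ioc (p k) (p (k+1)), ENNReal.ofReal (‖deriv ω t‖ ^ 2 / 2) := by
    intro k hk
    have hk := Finset.mem_range.1 hk
    have e1 := hr (k+1) hk
    push_cast at e1
    rw [e1, hr k hk.le, mul_div_assoc, ENNReal.ofReal_mul hN'.le, ofReal_half_sq]
    have := h.increment_le (hp0 k) (hmono k.le_succ) (hle1 (k+1) hk)
    rw [Nat.succ_eq_add_one, hstep] at this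
    simp_rw [ofReal_half_sq, div_eq_mul_inv]
    rw [lintegral_mul_const' _ _ (by simp), ← mul_assoc]
    gcongr
    calc ENNReal.ofReal N * ‖ω (p (k+1)) - ω (p k)‖ₑ ^ 2
        ≤ ENNReal.ofReal N * (ENNReal.ofReal (1 / N) *
          ∫⁻ t in Ioc (p k) (p (k+1)), ‖deriv ω t‖ₑ ^ 2) := by gcongr
      _ = _ := by
        rw [← mul_assoc, ← ENNReal.ofReal_mul hN'.le, mul_one_div_cancel hN'.ne']
        simp
  rw [pathAction, dif_pos h, discEnergy, ENNReal.ofReal_sum_of_nonneg (fun _ _ => by positivity)]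
  refine (Finset.sum_le_sum hterm).trans ?_
  rw [← lintegral_biUnion_finset (t := fun k => Ioc (p k) (p (k + 1)))
    (fun i _ j _ hij => hmono.pairwise_disjoint_on_Ioc_succ hij) (fun _ _ => measurableSet_Ioc)]
  refine lintegral_mono_set (iUnion₂_subset fun k hk x hx => ?_)
  exact ⟨(hp0 k).trans hx.1.le, hx.2.trans (hle1 _ (Finset.mem_range.1 hk))⟩

/-- A discrete energy bound makes `y` Hölder continuous of exponent `1/2` at rational times. -/
lemma holder_of_discEnergy_le {n : ℕ} {y : ℚ → Euc n} {C : ℝ} (hC : ∀ N, discEnergy N y ≤ C)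
    {p q : ℚ} (hp : 0 ≤ p) (hpq : p ≤ q) (hq : q ≤ 1) :
    ‖y q - y p‖ ^ 2 ≤ 2 * C * (q - p : ℝ) := by
  obtain ⟨N, j, k, hN, rfl, rfl⟩ : ∃ N j k : ℕ, 0 < N ∧ p = j / N ∧ q = k / N := by
    refine ⟨p.den * q.den, p.num.toNat * q.den, q.num.toNat * p.den,
      Nat.mul_pos p.den_pos q.den_pos, ?_, ?_⟩
    · have : ((p.num.toNat : ℤ) : ℚ) = p.num := by
        rw [Int.toNat_of_nonneg (Rat.num_nonneg.2 hp)]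
      push_cast at this ⊢
      have hq0 : (q.den : ℚ) ≠ 0 := by exact_mod_cast q.den_ne_zero
      rw [this, mul_div_mul_right _ _ hq0, Rat.num_div_den]
    · have : ((q.num.toNat : ℤ) : ℚ) = q.num := by
        rw [Int.toNat_of_nonneg (Rat.num_nonneg.2 (hp.trans hpq))]
      push_cast at this ⊢
      have hp0 : (p.den : ℚ) ≠ 0 := by exact_mod_cast p.den_ne_zero
      rw [this, mul_comm (p.den : ℚ), mul_div_mul_right _ _ hp0, Rat.num_div_den]
  have hNq : (0:ℚ) < N := by exact_mod_cast hN
  have hNr : (0:ℝ) < N := by exact_mod_cast hN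
  have hjk : j ≤ k := by
    have := (div_le_div_iff_of_pos_right hNq).1 hpq
    exact_mod_cast this
  have hkN : k ≤ N := by
    have := (div_le_one hNq).1 hq
    exact_mod_cast this
  set d : ℕ → Euc n := fun i => y ((i + 1) / N) - y (i / N) with hd
  have hsum : y (k / N) - y (j / N) = ∑ i ∈ Finset.Ico j k, d i := by
    rw [← Finset.sum_Ico_sub (fun i : ℕ => y ((i : ℚ) / N)) hjk]
    simp [hd]
  have hE : ∑ i ∈ Finset.range N, ‖d i‖ ^ 2 ≤ 2 * C / N := by
    have := hC N
    rw [discEnergy, ← Finset.sum_div, ← Finset.mul_sum] at this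
    rw [le_div_iff₀ hNr]
    simp only [hd]
    linarith
  have : ‖y (k / N) - y (j / N)‖ ^ 2 ≤ (k - j : ℝ) * (2 * C / N) := by
    calc ‖y (k / N) - y (j / N)‖ ^ 2 ≤ (∑ i ∈ Finset.Ico j k, ‖d i‖) ^ 2 := by
          rw [hsum]; gcongr; exact norm_sum_le _ _
      _ ≤ (Finset.Ico j k).card * ∑ i ∈ Finset.Ico j k, ‖d i‖ ^ 2 := sq_sum_le_card_mul_sum_sq
      _ ≤ (k - j : ℝ) * (2 * C / N) := by
          rw [Nat.card_Ico, Nat.cast_sub hjk]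
          have : (j:ℝ) ≤ k := by exact_mod_cast hjk
          gcongr
          refine le_trans (Finset.sum_le_sum_of_subset_of_nonneg ?_ fun _ _ _ => by positivity) hE
          intro i hi
          simp at hi ⊢; omega
  refine this.trans_eq ?_
  push_cast
  field_simp

/-! ### Extension of finite-energy maps to real times -/

/-- The energy of `y`: supremum of the discrete energies over all uniform partitions. -/
noncomputable def energy {n : ℕ} (y : ℚ → Euc n) : ℝ≥0∞ :=
  ⨆ N : ℕ, ENNReal.ofReal (discEnergy N y)

lemma energy_restr_le {n : ℕ} (ω : ℝ → Euc n) : energy (restr ω) ≤ pathAction ω :=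
  iSup_le fun N => discEnergy_restr_le N ω

lemma discEnergy_le_of_energy {n : ℕ} {y : ℚ → Euc n} (h : energy y < ⊤) (N : ℕ) :
    discEnergy N y ≤ (energy y).toReal :=
  (ENNReal.ofReal_le_iff_le_toReal h.ne).1 (le_iSup (fun N => ENNReal.ofReal (discEnergy N y)) N)

/-- Approximation of `clamp t` from below by a multiple of `1 / N`. -/
noncomputable def apx (N : ℕ) (t : ℝ) : ℚ := (⌊clamp t * N⌋₊ : ℚ) / N

lemma apx_mem (N : ℕ) (t : ℝ) : 0 ≤ apx N t ∧ apx N t ≤ 1 := by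
  refine ⟨by unfold apx; positivity, ?_⟩
  unfold apx
  refine div_le_one_of_le₀ ?_ (by positivity)
  have : ⌊clamp t * N⌋₊ ≤ N := by
    refine Nat.floor_le_of_le ?_
    exact mul_le_of_le_one_left (by positivity) (clamp_mem t).2
  exact_mod_cast this

lemma apx_mem_Icc (N : ℕ) (t : ℝ) : ((apx N t : ℚ) : ℝ) ∈ Icc (0:ℝ) 1 := by
  exact ⟨by exact_mod_cast (apx_mem N t).1, by exact_mod_cast (apx_mem N t).2⟩

lemma tendsto_apx (t : ℝ) : Tendsto (fun N => ((apx N t : ℚ) : ℝ)) atTop (nhds (clamp t)) := by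
  have := (tendsto_nat_floor_mul_div_atTop (clamp_mem t).1).comp
    (tendsto_natCast_atTop_atTop (R := ℝ))
  refine this.congr fun N => ?_
  simp [apx]

open Classical in
/-- Extension of a finite-energy map from rational to real times (`0` if the energy is infinite,
so that it is measurable in `y`). -/
noncomputable def pathExt {n : ℕ} (y : ℚ → Euc n) (t : ℝ) : Euc n :=
  if energy y < ⊤ then limUnder atTop (fun N => y (apx N t)) else 0

lemma norm_sub_le_of_energy {n : ℕ} {y : ℚ → Euc n} (h : energy y < ⊤) {p q : ℚ}
    (hp : 0 ≤ p ∧ p ≤ 1) (hq : 0 ≤ q ∧ q ≤ 1) :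
    ‖y q - y p‖ ^ 2 ≤ 2 * (energy y).toReal * |(q - p : ℝ)| := by
  rcases le_total p q with hpq | hpq
  · rw [abs_of_nonneg (by rw [sub_nonneg]; exact_mod_cast hpq)]
    exact holder_of_discEnergy_le (discEnergy_le_of_energy h) hp.1 hpq hq.2
  · rw [norm_sub_rev, abs_sub_comm, abs_of_nonneg (by rw [sub_nonneg]; exact_mod_cast hpq)]
    exact holder_of_discEnergy_le (discEnergy_le_of_energy h) hq.1 hpq hp.2

lemma tendsto_pathExt {n : ℕ} {y : ℚ → Euc n} (h : energy y < ⊤) (t : ℝ) :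
    Tendsto (fun N => y (apx N t)) atTop (nhds (pathExt y t)) := by
  rw [pathExt, if_pos h]
  refine CauchySeq.tendsto_limUnder ?_
  have hc := (tendsto_apx t).cauchySeq
  rw [Metric.cauchySeq_iff] at hc ⊢
  intro ε hε
  set C := (energy y).toReal with hC
  have hC0 : 0 ≤ C := ENNReal.toReal_nonneg
  obtain ⟨N, hN⟩ := hc (ε ^ 2 / (2 * C + 1)) (by positivity)
  refine ⟨N, fun i hi j hj => ?_⟩
  have h1 := hN i hi j hj
  rw [Real.dist_eq, lt_div_iff₀ (by positivity)] at h1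
  have h2 := norm_sub_le_of_energy h (apx_mem j t) (apx_mem i t)
  rw [dist_eq_norm]
  refine lt_of_pow_lt_pow_left₀ 2 hε.le ?_
  have := abs_nonneg ((apx i t : ℝ) - apx j t)
  nlinarith

lemma pathExt_ratCast {n : ℕ} {y : ℚ → Euc n} (h : energy y < ⊤) {q : ℚ} (hq : 0 ≤ q ∧ q ≤ 1) :
    pathExt y q = y q := by
  refine tendsto_nhds_unique (tendsto_pathExt h q) ?_
  rw [tendsto_iff_norm_sub_tendsto_zero]
  have hq' : clamp (q:ℝ) = q := clamp_eq ⟨by exact_mod_cast hq.1, by exact_mod_cast hq.2⟩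
  have h1 : Tendsto (fun N => √(2 * (energy y).toReal * |((apx N q : ℚ) - q : ℝ)|)) atTop
      (nhds 0) := by
    have h0 := tendsto_apx q
    rw [hq'] at h0
    have := (((h0.sub_const (q:ℝ)).abs).const_mul (2 * (energy y).toReal)).sqrt
    simpa using this
  refine squeeze_zero (fun _ => norm_nonneg _) (fun N => ?_) h1
  exact Real.le_sqrt_of_sq_le (norm_sub_le_of_energy h hq (apx_mem N q))

/-- Absolute continuity estimate at the level of the uniform partition into `N` intervals: the
endpoints of disjoint intervals are rounded down to multiples of `1 / N`, which keeps the
intervals disjoint. -/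
lemma sum_norm_apx_le {n : ℕ} {y : ℚ → Euc n} {C : ℝ} (hC : ∀ N, discEnergy N y ≤ C)
    (M : ℕ) (a b : ℕ → ℝ) (ha : ∀ i < M, 0 ≤ a i) (hab : ∀ i < M, a i ≤ b i)
    (hb : ∀ i < M, b i ≤ 1)
    (hdisj : (Finset.range M : Set ℕ).PairwiseDisjoint fun i => Ioc (a i) (b i))
    {N : ℕ} (hN : 0 < N) :
    (∑ i ∈ Finset.range M, ‖y (apx N (b i)) - y (apx N (a i))‖) ^ 2 ≤
      2 * C * (∑ i ∈ Finset.range M, (b i - a i) + M / N) := by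
  have hNr : (0:ℝ) < N := by exact_mod_cast hN
  set d : ℕ → Euc n := fun i => y ((i + 1) / N) - y (i / N) with hd
  have hE : ∑ i ∈ Finset.range N, ‖d i‖ ^ 2 ≤ 2 * C / N := by
    have := hC N
    rw [discEnergy, ← Finset.sum_div, ← Finset.mul_sum] at this
    rw [le_div_iff₀ hNr]
    simp only [hd]
    linarith
  set A : ℕ → ℕ := fun i => ⌊a i * N⌋₊ with hA
  set B : ℕ → ℕ := fun i => ⌊b i * N⌋₊ with hB
  have hAB : ∀ i < M, A i ≤ B i := fun i hi => Nat.floor_mono (by have := hab i hi; gcongr)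
  have hBN : ∀ i < M, B i ≤ N := fun i hi =>
    Nat.floor_le_of_le (mul_le_of_le_one_left hNr.le (hb i hi))
  have hterm : ∀ i ∈ Finset.range M, ‖y (apx N (b i)) - y (apx N (a i))‖ ≤
      ∑ k ∈ Finset.Ico (A i) (B i), ‖d k‖ := by
    intro i hi
    have hi := Finset.mem_range.1 hi
    have h1 : y (apx N (b i)) - y (apx N (a i)) = ∑ k ∈ Finset.Ico (A i) (B i), d k := by
      rw [apx, apx, clamp_eq ⟨ha i hi, (hab i hi).trans (hb i hi)⟩,
        clamp_eq ⟨(ha i hi).trans (hab i hi), hb i hi⟩,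
        ← Finset.sum_Ico_sub (fun i : ℕ => y ((i : ℚ) / N)) (hAB i hi)]
      simp [hd]
    rw [h1]; exact norm_sum_le _ _
  have hdisj' : (Finset.range M : Set ℕ).PairwiseDisjoint fun i => Finset.Ico (A i) (B i) := by
    -- if `k` lies in `[A i, B i)` then `(k + 1) / N` lies in `(a i, b i]`
    have key : ∀ i ∈ (Finset.range M : Set ℕ), ∀ k ∈ Finset.Ico (A i) (B i),
        ((k + 1 : ℕ) : ℝ) / N ∈ Ioc (a i) (b i) := by
      intro i hi k hk
      have hi : i < M := by simpa using hi
      rw [Finset.mem_Ico] at hk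
      constructor
      · rw [lt_div_iff₀ hNr]
        exact (Nat.floor_lt (mul_nonneg (ha i hi) hNr.le)).1 (Nat.lt_succ_of_le hk.1)
      · rw [div_le_iff₀ hNr]
        exact (Nat.le_floor_iff (mul_nonneg ((ha i hi).trans (hab i hi)) hNr.le)).1 hk.2
    intro i hi j hj hij
    rw [Function.onFun, Finset.disjoint_left]
    intro k hk hk'
    exact Set.disjoint_left.1 (hdisj hi hj hij) (key i hi k hk) (key j hj k hk')
  set U := (Finset.range M).biUnion fun i => Finset.Ico (A i) (B i) with hU
  have hUN : U ⊆ Finset.range N := by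
    intro k hk
    simp only [hU, Finset.mem_biUnion, Finset.mem_range, Finset.mem_Ico] at hk ⊢
    obtain ⟨i, hi, h1, h2⟩ := hk
    exact h2.trans_le (hBN i hi)
  have hcard : (U.card : ℝ) ≤ N * (∑ i ∈ Finset.range M, (b i - a i) + M / N) := by
    rw [hU, Finset.card_biUnion hdisj']
    have h2 : ∀ i ∈ Finset.range M, ((Finset.Ico (A i) (B i)).card : ℝ) ≤
        N * (b i - a i) + 1 := by
      intro i hi
      have hi := Finset.mem_range.1 hi
      rw [Nat.card_Ico, Nat.cast_sub (hAB i hi)]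
      have h3 : (B i : ℝ) ≤ b i * N :=
        Nat.floor_le (mul_nonneg ((ha i hi).trans (hab i hi)) hNr.le)
      have h4 : a i * N < A i + 1 := Nat.lt_floor_add_one _
      nlinarith
    push_cast
    refine (Finset.sum_le_sum h2).trans_eq ?_
    rw [Finset.sum_add_distrib, ← Finset.mul_sum, mul_add, mul_div_cancel₀ _ hNr.ne']
    simp
  calc (∑ i ∈ Finset.range M, ‖y (apx N (b i)) - y (apx N (a i))‖) ^ 2
      ≤ (∑ i ∈ Finset.range M, ∑ k ∈ Finset.Ico (A i) (B i), ‖d k‖) ^ 2 := by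
        gcongr with i hi
        exact hterm i hi
    _ = (∑ k ∈ U, ‖d k‖) ^ 2 := by rw [hU, Finset.sum_biUnion hdisj']
    _ ≤ U.card * ∑ k ∈ U, ‖d k‖ ^ 2 := sq_sum_le_card_mul_sum_sq
    _ ≤ (N * (∑ i ∈ Finset.range M, (b i - a i) + M / N)) * (2 * C / N) := by
        refine mul_le_mul hcard ?_ (by positivity) ((Nat.cast_nonneg _).trans hcard)
        exact (Finset.sum_le_sum_of_subset_of_nonneg hUN fun _ _ _ => by positivity).trans hE
    _ = _ := by field_simp

/-- The limit `N → ∞` of `sum_norm_apx_le`, in which the rounding error `M / N` disappears. -/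
lemma sum_norm_pathExt_le {n : ℕ} {y : ℚ → Euc n} (h : energy y < ⊤)
    (M : ℕ) (a b : ℕ → ℝ) (ha : ∀ i < M, 0 ≤ a i) (hab : ∀ i < M, a i ≤ b i)
    (hb : ∀ i < M, b i ≤ 1)
    (hdisj : (Finset.range M : Set ℕ).PairwiseDisjoint fun i => Ioc (a i) (b i)) :
    (∑ i ∈ Finset.range M, ‖pathExt y (b i) - pathExt y (a i)‖) ^ 2 ≤
      2 * (energy y).toReal * ∑ i ∈ Finset.range M, (b i - a i) := by
  have h1 : Tendsto (fun N : ℕ => (∑ i ∈ Finset.range M, ‖y (apx N (b i)) - y (apx N (a i))‖) ^ 2)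
      atTop (nhds ((∑ i ∈ Finset.range M, ‖pathExt y (b i) - pathExt y (a i)‖) ^ 2)) :=
    (tendsto_finsetSum _ fun i _ => ((tendsto_pathExt h _).sub (tendsto_pathExt h _)).norm).pow 2
  have h2 : Tendsto (fun N : ℕ => 2 * (energy y).toReal *
      (∑ i ∈ Finset.range M, (b i - a i) + M / N)) atTop
      (nhds (2 * (energy y).toReal * (∑ i ∈ Finset.range M, (b i - a i) + 0))) :=
    ((tendsto_const_div_atTop_nhds_zero_nat (M:ℝ)).const_add _).const_mul _
  rw [add_zero] at h2
  refine le_of_tendsto_of_tendsto h1 h2 ?_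
  filter_upwards [eventually_gt_atTop 0] with N hN
  exact sum_norm_apx_le (discEnergy_le_of_energy h) M a b ha hab hb hdisj hN

lemma absolutelyContinuous_pathExt {n : ℕ} {y : ℚ → Euc n} (h : energy y < ⊤) :
    AbsolutelyContinuousOnInterval (pathExt y) 0 1 := by
  rw [absolutelyContinuousOnInterval_iff]
  intro ε hε
  set C := (energy y).toReal with hC
  have hC0 : 0 ≤ C := ENNReal.toReal_nonneg
  refine ⟨ε ^ 2 / (2 * C + 1), by positivity, ?_⟩
  rintro ⟨M, I⟩ hI hlen
  simp only [AbsolutelyContinuousOnInterval.disjWithin, uIcc_of_le (zero_le_one (α := ℝ)),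
    mem_ofPred_eq, Finset.mem_range] at hI hlen ⊢
  rw [lt_div_iff₀ (by positivity)] at hlen
  have key := sum_norm_pathExt_le h M (fun i => min (I i).1 (I i).2) (fun i => max (I i).1 (I i).2)
    (fun i hi => le_min (hI.1 i hi).1.1 (hI.1 i hi).2.1) (fun i _ => min_le_max)
    (fun i hi => max_le (hI.1 i hi).1.2 (hI.1 i hi).2.2) hI.2
  have e1 : ∀ i, ‖pathExt y (max (I i).1 (I i).2) - pathExt y (min (I i).1 (I i).2)‖ =
      dist (pathExt y (I i).1) (pathExt y (I i).2) := by
    intro i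
    rcases le_total (I i).1 (I i).2 with h | h
    · rw [max_eq_right h, min_eq_left h, dist_comm, dist_eq_norm]
    · rw [max_eq_left h, min_eq_right h, dist_eq_norm]
  have e2 : ∀ i, max (I i).1 (I i).2 - min (I i).1 (I i).2 = dist (I i).1 (I i).2 := by
    intro i
    rw [max_sub_min_eq_abs', Real.dist_eq]
  simp only [e1, e2] at key
  refine lt_of_pow_lt_pow_left₀ 2 hε.le (key.trans_lt ?_)
  have : 0 ≤ ∑ i ∈ Finset.range M, dist (I i).1 (I i).2 := Finset.sum_nonneg fun _ _ => dist_nonneg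
  rw [← hC]
  nlinarith

lemma coord_le {n : ℕ} (x : Euc n) (i : Fin n) : ‖x i‖ ≤ ‖x‖ := PiLp.norm_apply_le x i

/-- Fundamental theorem of calculus for absolutely continuous curves in `ℝⁿ`, deduced from the
real-valued case coordinate by coordinate. -/
lemma absCts_of_absolutelyContinuous {n : ℕ} {u : ℝ → Euc n}
    (hu : AbsolutelyContinuousOnInterval u 0 1) :
    AbsCts u ∧ ∀ᵐ t, t ∈ Icc (0:ℝ) 1 → DifferentiableAt ℝ u t := by
  have hcoord : ∀ i, AbsolutelyContinuousOnInterval (fun t => u t i) 0 1 := by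
    intro i
    rw [absolutelyContinuousOnInterval_iff] at hu ⊢
    intro ε hε
    obtain ⟨δ, hδ, H⟩ := hu ε hε
    refine ⟨δ, hδ, fun E hE hlen => lt_of_le_of_lt (Finset.sum_le_sum fun k _ => ?_) (H E hE hlen)⟩
    rw [dist_eq_norm, dist_eq_norm]
    exact coord_le (u (E.2 k).1 - u (E.2 k).2) i
  have hdiff : ∀ᵐ t, t ∈ Icc (0:ℝ) 1 → DifferentiableAt ℝ u t := by
    have := ae_all_iff.2 fun i => (hcoord i).ae_differentiableAt
    filter_upwards [this] with t ht ht'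
    rw [differentiableAt_euclidean]
    exact fun i => ht i (by rwa [uIcc_of_le zero_le_one])
  have hderiv : ∀ᵐ t, t ∈ Icc (0:ℝ) 1 → ∀ i, deriv u t i = deriv (fun t => u t i) t := by
    filter_upwards [hdiff] with t ht ht' i
    exact ((EuclideanSpace.proj i : Euc n →L[ℝ] ℝ).hasFDerivAt.comp_hasDerivAt t
      (ht ht').hasDerivAt).deriv.symm
  have hint : IntegrableOn (deriv u) (Icc (0:ℝ) 1) := by
    have hm : Integrable (fun t => WithLp.toLp 2 (fun i => deriv (fun t => u t i) t) : ℝ → Euc n)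
        (volume.restrict (Icc (0:ℝ) 1)) := by
      refine (PiLp.continuousLinearEquiv 2 ℝ (fun _ : Fin n => ℝ)).symm.toContinuousLinearMap
        |>.integrable_comp (φ := fun t i => deriv (fun t => u t i) t) ?_
      refine Integrable.of_eval fun i => ?_
      have := (hcoord i).intervalIntegrable_deriv
      rwa [intervalIntegrable_iff_integrableOn_Icc_of_le zero_le_one] at this
    refine hm.congr ?_
    rw [EventuallyEq, ae_restrict_iff' measurableSet_Icc]
    filter_upwards [hderiv] with t ht ht'
    ext i
    exact (ht ht' i).symm
  refine ⟨⟨hint, fun t ht => ?_⟩, hdiff⟩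
  have hsub : Ioc (0:ℝ) t ⊆ Icc 0 1 := fun s hs => ⟨hs.1.le, hs.2.trans ht.2⟩
  ext i
  have h1 : (∫ s in Ioc (0:ℝ) t, deriv u s) i = ∫ s in Ioc (0:ℝ) t, deriv u s i :=
    ((EuclideanSpace.proj i : Euc n →L[ℝ] ℝ).integral_comp_comm (hint.mono_set hsub)).symm
  have h2 : ∫ s in Ioc (0:ℝ) t, deriv u s i = ∫ s in Ioc (0:ℝ) t, deriv (fun t => u t i) s := by
    refine setIntegral_congr_ae measurableSet_Ioc ?_
    filter_upwards [hderiv] with s hs hs'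
    exact hs (hsub hs') i
  have h3 := ((hcoord i).mono (c := 0) (d := t) (by
    rw [uIcc_of_le ht.1, uIcc_of_le zero_le_one]; exact Icc_subset_Icc_right ht.2)).integral_deriv_eq_sub
  rw [intervalIntegral.integral_of_le ht.1] at h3
  simp only [PiLp.add_apply]
  rw [h1, h2, h3]
  ring

/-! ### Action of the extension -/

/-- Difference quotients over intervals `[α k, β k) ∋ t` shrinking to `t` converge to the
derivative. -/
lemma tendsto_straddle {E : Type*} [NormedAddCommGroup E] [NormedSpace ℝ E] {u : ℝ → E} {v : E}
    {t : ℝ} (hu : HasDerivAt u v t) {α β : ℕ → ℝ} (hα : Tendsto α atTop (nhds t))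
    (hβ : Tendsto β atTop (nhds t)) (h : ∀ᶠ k in atTop, α k ≤ t ∧ t < β k) :
    Tendsto (fun k => (β k - α k)⁻¹ • (u (β k) - u (α k))) atTop (nhds v) := by
  rw [Metric.tendsto_nhds]
  intro ε hε
  have ho := (hasDerivAt_iff_isLittleO.1 hu).def (half_pos hε)
  filter_upwards [h, hα.eventually ho, hβ.eventually ho] with k hk h1 h2
  have hpos : 0 < β k - α k := by linarith
  rw [Real.norm_of_nonpos (by linarith)] at h1
  rw [Real.norm_of_nonneg (by linarith)] at h2
  have e : (β k - α k)⁻¹ • (u (β k) - u (α k)) - v = (β k - α k)⁻¹ •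
      ((u (β k) - u t - (β k - t) • v) - (u (α k) - u t - (α k - t) • v)) := by
    have : (u (β k) - u t - (β k - t) • v) - (u (α k) - u t - (α k - t) • v) =
        (u (β k) - u (α k)) - (β k - α k) • v := by module
    rw [this, smul_sub _ (u (β k) - u (α k)), smul_smul, inv_mul_cancel₀ hpos.ne', one_smul]
  rw [dist_eq_norm, e, norm_smul, norm_inv, Real.norm_of_nonneg hpos.le,
    inv_mul_lt_iff₀ hpos]
  refine (norm_sub_le _ _).trans_lt ?_
  nlinarith

/-- The difference quotient of `y` on the interval of length `1 / N` that contains `t`. -/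
noncomputable def slopeN {n : ℕ} (N : ℕ) (y : ℚ → Euc n) (t : ℝ) : Euc n :=
  (N : ℝ) • (y ((⌊t * N⌋₊ + 1) / N) - y (⌊t * N⌋₊ / N))

lemma measurable_slopeN {n : ℕ} (N : ℕ) (y : ℚ → Euc n) : Measurable (slopeN N y) := by
  have : slopeN N y = (fun k : ℕ => (N : ℝ) • (y ((k + 1) / N) - y (k / N))) ∘
    fun t : ℝ => ⌊t * N⌋₊ := rfl
  rw [this]
  exact (measurable_of_countable _).comp (Nat.measurable_floor.comp (by fun_prop))

/-- The discrete energy is the action of the piecewise linear interpolation of `y`. -/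
lemma lintegral_slopeN_le {n : ℕ} (N : ℕ) (y : ℚ → Euc n) :
    ∫⁻ t in Ico (0:ℝ) 1, ENNReal.ofReal (‖slopeN N y t‖ ^ 2 / 2) ≤
      ENNReal.ofReal (discEnergy N y) := by
  rcases Nat.eq_zero_or_pos N with rfl | hN
  · simp [slopeN]
  have hNr : (0:ℝ) < N := by exact_mod_cast hN
  have hsub : Ico (0:ℝ) 1 ⊆ ⋃ k ∈ Finset.range N, Ico ((k:ℝ) / N) (((k:ℝ) + 1) / N) := by
    intro t ht
    simp only [mem_iUnion, Finset.mem_range]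
    refine ⟨⌊t * N⌋₊, ?_, ?_, ?_⟩
    · exact (Nat.floor_lt (mul_nonneg ht.1 hNr.le)).2 (mul_lt_of_lt_one_left hNr ht.2)
    · rw [div_le_iff₀ hNr]; exact Nat.floor_le (mul_nonneg ht.1 hNr.le)
    · rw [lt_div_iff₀ hNr]; exact Nat.lt_floor_add_one _
  refine (lintegral_mono_set hsub).trans ?_
  have hdisj : (Finset.range N : Set ℕ).PairwiseDisjoint
      fun k : ℕ => Ico ((k:ℝ) / N) (((k:ℝ) + 1) / N) := by
    have hmono : Monotone (fun k : ℕ => (k:ℝ) / N) := fun i j hij => by dsimp only; gcongr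
    intro i _ j _ hij
    have := hmono.pairwise_disjoint_on_Ico_succ hij
    simpa [Function.onFun] using this
  rw [lintegral_biUnion_finset hdisj (fun _ _ => measurableSet_Ico), discEnergy,
    ENNReal.ofReal_sum_of_nonneg (fun _ _ => by positivity)]
  refine Finset.sum_le_sum fun k _ => le_of_eq ?_
  have hc : ∀ t ∈ Ico ((k:ℝ) / N) (((k:ℝ) + 1) / N), ENNReal.ofReal (‖slopeN N y t‖ ^ 2 / 2) =
      ENNReal.ofReal (‖(N : ℝ) • (y ((k + 1) / N) - y (k / N))‖ ^ 2 / 2) := by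
    intro t ht
    have : ⌊t * N⌋₊ = k := by
      rw [Nat.floor_eq_iff (mul_nonneg ((by positivity : (0:ℝ) ≤ k / N).trans ht.1) hNr.le)]
      exact ⟨(div_le_iff₀ hNr).1 ht.1, (lt_div_iff₀ hNr).1 ht.2⟩
    rw [slopeN, this]
  rw [setLIntegral_congr_fun measurableSet_Ico hc, setLIntegral_const, Real.volume_Ico,
    ← ENNReal.ofReal_mul (by positivity), norm_smul, Real.norm_of_nonneg hNr.le]
  congr 1
  field_simp
  ring

/-- The extension of `y` has action at most the energy of `y`: the slopes of `y` converge almost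
everywhere to the derivative of the extension, and Fatou's lemma applies. -/
lemma pathAction_pathExt_le {n : ℕ} (y : ℚ → Euc n) : pathAction (pathExt y) ≤ energy y := by
  by_cases h : energy y < ⊤
  swap
  · rw [not_lt_top_iff.1 h]; exact le_top
  obtain ⟨hac, hdiff⟩ := absCts_of_absolutelyContinuous (absolutelyContinuous_pathExt h)
  rw [pathAction, dif_pos hac, setLIntegral_congr (Ico_ae_eq_Icc (a := (0:ℝ)) (b := 1)).symm]
  have hlim : ∀ᵐ t ∂volume.restrict (Ico (0:ℝ) 1),
      Tendsto (fun N : ℕ => slopeN N y t) atTop (nhds (deriv (pathExt y) t)) := by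
    rw [ae_restrict_iff' measurableSet_Ico]
    filter_upwards [hdiff] with t ht ht'
    have hα : Tendsto (fun N : ℕ => (⌊t * N⌋₊ : ℝ) / N) atTop (nhds t) :=
      (tendsto_nat_floor_mul_div_atTop ht'.1).comp (tendsto_natCast_atTop_atTop (R := ℝ))
    have hβ : Tendsto (fun N : ℕ => ((⌊t * N⌋₊ : ℝ) + 1) / N) atTop (nhds t) := by
      have := hα.add (tendsto_const_div_atTop_nhds_zero_nat (1:ℝ))
      rw [add_zero] at this
      exact this.congr fun N => (add_div _ _ _).symm
    refine (tendsto_straddle (ht ⟨ht'.1, ht'.2.le⟩).hasDerivAt hα hβ ?_).congr' ?_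
    · filter_upwards [eventually_gt_atTop 0] with N hN
      have hNr : (0:ℝ) < N := by exact_mod_cast hN
      rw [div_le_iff₀ hNr, lt_div_iff₀ hNr]
      exact ⟨Nat.floor_le (mul_nonneg ht'.1 hNr.le), Nat.lt_floor_add_one _⟩
    · filter_upwards [eventually_gt_atTop 0] with N hN
      have hNr : (0:ℝ) < N := by exact_mod_cast hN
      have hNq : (0:ℚ) < N := by exact_mod_cast hN
      have hlt : ⌊t * N⌋₊ < N :=
        (Nat.floor_lt (mul_nonneg ht'.1 hNr.le)).2 (mul_lt_of_lt_one_left hNr ht'.2)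
      have e1 : ((⌊t * N⌋₊ : ℝ) + 1) / N = (((⌊t * N⌋₊ + 1) / N : ℚ) : ℝ) := by push_cast; rfl
      have e2 : (⌊t * N⌋₊ : ℝ) / N = ((⌊t * N⌋₊ / N : ℚ) : ℝ) := by push_cast; rfl
      have e3 : ((⌊t * N⌋₊ : ℝ) + 1) / N - (⌊t * N⌋₊ : ℝ) / N = (N:ℝ)⁻¹ := by field_simp; ring
      rw [e3, e1, e2, pathExt_ratCast h ⟨by positivity, ?_⟩, pathExt_ratCast h ⟨by positivity, ?_⟩,
        inv_inv, slopeN]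
      · rw [div_le_one hNq]; exact_mod_cast hlt.le
      · rw [div_le_one hNq]; exact_mod_cast hlt
  calc ∫⁻ t in Ico (0:ℝ) 1, ENNReal.ofReal (‖deriv (pathExt y) t‖ ^ 2 / 2)
      = ∫⁻ t in Ico (0:ℝ) 1, liminf (fun N => ENNReal.ofReal (‖slopeN N y t‖ ^ 2 / 2)) atTop := by
        refine lintegral_congr_ae ?_
        filter_upwards [hlim] with t ht
        exact (ENNReal.tendsto_ofReal ((ht.norm.pow 2).div_const 2)).liminf_eq.symm
    _ ≤ liminf (fun N => ∫⁻ t in Ico (0:ℝ) 1, ENNReal.ofReal (‖slopeN N y t‖ ^ 2 / 2)) atTop :=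
        lintegral_liminf_le fun N =>
          (((measurable_slopeN N y).norm.pow_const 2).div_const 2).ennreal_ofReal
    _ ≤ energy y := by
        refine liminf_le_of_le (by isBoundedDefault) fun b hb => ?_
        obtain ⟨N, hN⟩ := hb.exists
        exact hN.trans ((lintegral_slopeN_le N y).trans
          (le_iSup (fun N => ENNReal.ofReal (discEnergy N y)) N))

lemma measurable_discEnergy {n : ℕ} (N : ℕ) : Measurable (discEnergy N : (ℚ → Euc n) → ℝ) := by
  unfold discEnergy
  fun_prop

lemma continuous_discEnergy {n : ℕ} (N : ℕ) : Continuous (discEnergy N : (ℚ → Euc n) → ℝ) := by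
  unfold discEnergy
  fun_prop

lemma measurable_energy {n : ℕ} : Measurable (energy : (ℚ → Euc n) → ℝ≥0∞) :=
  Measurable.iSup fun N => (measurable_discEnergy N).ennreal_ofReal

/-- Each time marginal of the extension is a pointwise limit of coordinate maps, hence measurable. -/
lemma measurable_pathExt {n : ℕ} (t : ℝ) : Measurable fun y : ℚ → Euc n => pathExt y t := by
  classical
  have hset : MeasurableSet {y : ℚ → Euc n | energy y < ⊤} :=
    measurableSet_lt measurable_energy measurable_const
  refine measurable_of_tendsto_metrizable (f := fun N (y : ℚ → Euc n) =>
    if energy y < ⊤ then y (apx N t) else 0)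
    (fun N => Measurable.ite hset (measurable_pi_apply _) measurable_const) ?_
  rw [tendsto_pi_nhds]
  intro y
  by_cases h : energy y < ⊤
  · simpa [h] using tendsto_pathExt h t
  · simp [h, pathExt]

/-! ### Narrow limits -/

section NarrowLimits

variable {X : Type*} [TopologicalSpace X] [MeasurableSpace X]

/-- The integral of a countable supremum of continuous functions is lower semicontinuous for narrow
convergence. -/
lemma lintegral_le_of_tendsto_narrow [OpensMeasurableSpace X] {ι : Type*} {F : Filter ι} [F.NeBot]
    {μs : ι → ProbabilityMeasure X} {μ : ProbabilityMeasure X} (h : Tendsto μs F (nhds μ))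
    {f : ℕ → X → ℝ≥0∞} (hf : ∀ N, Continuous (f N)) {c : ℝ≥0∞}
    (hc : ∀ i, ∫⁻ x, ⨆ N, f N x ∂(μs i : Measure X) ≤ c) :
    ∫⁻ x, ⨆ N, f N x ∂(μ : Measure X) ≤ c := by
  -- bounded continuous functions increasing to the supremum
  let g : ℕ → X → ℝ≥0 := fun M x => (min (partialSups f M x) M).toNNReal
  have hgtop : ∀ M x, min (partialSups f M x) (M : ℝ≥0∞) ≠ ⊤ := fun M x =>
    ((min_le_right _ _).trans_lt (ENNReal.natCast_lt_top M)).ne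
  have hgcoe : ∀ M x, ((g M x : ℝ≥0) : ℝ≥0∞) = min (partialSups f M x) M := fun M x =>
    ENNReal.coe_toNNReal (hgtop M x)
  have hgc : ∀ M, Continuous (g M) := by
    intro M
    refine ENNReal.continuousOn_toNNReal.comp_continuous ?_ (hgtop M)
    exact (Continuous.partialSups fun k _ => hf k).min continuous_const
  have hmono : Monotone fun M x => ((g M x : ℝ≥0) : ℝ≥0∞) := by
    intro M M' hM x
    simp only [hgcoe]
    exact min_le_min ((partialSups_monotone f hM) x) (by exact_mod_cast hM)
  have hsup : ∀ x, ⨆ N, f N x = ⨆ M, ((g M x : ℝ≥0) : ℝ≥0∞) := by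
    intro x
    have h1 : Tendsto (fun M => partialSups f M x) atTop (nhds (⨆ M, partialSups f M x)) :=
      tendsto_atTop_iSup fun M M' hM => (partialSups_monotone f hM) x
    have h2 := h1.min ENNReal.tendsto_nat_nhds_top
    have h3 : Tendsto (fun M => ((g M x : ℝ≥0) : ℝ≥0∞)) atTop
        (nhds (⨆ M, ((g M x : ℝ≥0) : ℝ≥0∞))) :=
      tendsto_atTop_iSup fun M M' hM => hmono hM x
    simp only [hgcoe] at h3 ⊢
    rw [tendsto_nhds_unique h3 h2, min_eq_left le_top, ← iSup_apply, ← iSup_apply,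
      iSup_partialSups_eq]
  simp_rw [hsup]
  rw [lintegral_iSup (fun M => (hgc M).measurable.coe_nnreal_ennreal) hmono]
  refine iSup_le fun M => ?_
  let φ : BoundedContinuousFunction X ℝ≥0 :=
    BoundedContinuousFunction.mkOfBound ⟨g M, hgc M⟩ M (by
      have hb : ∀ x, g M x ≤ M := fun x => by
        have := (hgcoe M x).le.trans (min_le_right _ _)
        exact_mod_cast this
      intro x y
      rw [NNReal.dist_eq, abs_le]
      have hx : (g M x : ℝ) ≤ M := by exact_mod_cast hb x
      have hy : (g M y : ℝ) ≤ M := by exact_mod_cast hb y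
      have hx0 := (g M x).2
      have hy0 := (g M y).2
      change -(M : ℝ) ≤ (g M x : ℝ) - g M y ∧ (g M x : ℝ) - g M y ≤ M
      change (0 : ℝ) ≤ (g M x : ℝ) at hx0
      change (0 : ℝ) ≤ (g M y : ℝ) at hy0
      constructor <;> linarith)
  have hφ := (ProbabilityMeasure.tendsto_iff_forall_lintegral_tendsto.1 h) φ
  refine le_of_tendsto hφ (Eventually.of_forall fun i => (lintegral_mono fun x => ?_).trans (hc i))
  rw [hsup]
  exact le_iSup (fun M => ((g M x : ℝ≥0) : ℝ≥0∞)) M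

/-- Prokhorov's theorem for probability measures concentrated on a common compact set. -/
lemma exists_tendsto_of_compact [T2Space X] [BorelSpace X] {K : Set X} (hK : IsCompact K)
    {μs : ℕ → ProbabilityMeasure X} (h : ∀ k, (μs k : Measure X) Kᶜ = 0) (F : Ultrafilter ℕ) :
    ∃ μ, Tendsto μs F (nhds μ) := by
  have ht : IsTightMeasureSet
      {x : Measure X | ∃ μ ∈ Set.range μs, (μ : Measure X) = x} := by
    rw [isTightMeasureSet_iff_exists_isCompact_measure_compl_le]
    rintro ε -
    refine ⟨K, hK, ?_⟩
    rintro _ ⟨_, ⟨k, rfl⟩, rfl⟩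
    simp [h k]
  have hc := isCompact_closure_of_isTightMeasureSet ht
  obtain ⟨μ, -, hμ⟩ := hc.ultrafilter_le_nhds' (F.map μs)
    (Ultrafilter.mem_map.2 (Filter.mem_of_superset Filter.univ_mem fun k _ =>
      subset_closure (mem_range_self (f := μs) k)))
  exact ⟨μ, hμ⟩

/-- Narrow limits commute with images under continuous maps. -/
lemma map_eq_of_tendsto [OpensMeasurableSpace X] {Y : Type*} [TopologicalSpace Y]
    [MeasurableSpace Y] [BorelSpace Y] [HasOuterApproxClosed Y]
    {ι : Type*} {F : Filter ι} [F.NeBot]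
    {μs : ι → ProbabilityMeasure X} {μ : ProbabilityMeasure X} (h : Tendsto μs F (nhds μ))
    {νs : ι → ProbabilityMeasure Y} {ν : ProbabilityMeasure Y} (h' : Tendsto νs F (nhds ν))
    {f : X → Y} (hf : Continuous f)
    (he : ∀ i, (μs i : Measure X).map f = νs i) : (μ : Measure X).map f = ν := by
  have h1 := ProbabilityMeasure.tendsto_map_of_tendsto_of_continuous μs μ h hf
  have h2 : (fun i => (μs i).map hf.measurable.aemeasurable) = νs :=
    funext fun i => Subtype.ext (he i)
  rw [h2] at h1
  have h3 := tendsto_nhds_unique h1 h'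
  exact congrArg (fun m : ProbabilityMeasure Y => (m : Measure Y)) h3

end NarrowLimits

/-! ### Limits of generalized flows -/

lemma measurable_restr {n : ℕ} : Measurable fun p : (ℝ → Euc n) × Euc n => (restr p.1, p.2) :=
  (measurable_pi_iff.2 fun _ => (measurable_pi_apply _).comp measurable_fst).prodMk measurable_snd

lemma measurable_pathExt_prod {n : ℕ} :
    Measurable fun x : (ℚ → Euc n) × Euc n => (pathExt x.1, x.2) :=
  (measurable_pi_iff.2 fun t => (measurable_pathExt t).comp measurable_fst).prodMk measurable_snd

/-- A law on rational paths of almost surely finite energy with the right marginals extends to a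
generalized flow; the marginals at irrational times follow by dominated convergence. -/
lemma isGenFlow_map_pathExt {n : ℕ} {μD : Measure (Euc n)} [IsProbabilityMeasure μD]
    {η γ : Measure (Euc n × Euc n)} {Q : Measure ((ℚ → Euc n) × Euc n)} [IsProbabilityMeasure Q]
    (hQ : ∀ᵐ x ∂Q, energy x.1 < ⊤)
    (hq : ∀ q : ℚ, 0 ≤ q ∧ q ≤ 1 → Q.map (fun x => x.1 q) = μD)
    (h0 : Q.map (fun x => (x.1 0, x.2)) = η) (h1 : Q.map (fun x => (x.1 1, x.2)) = γ) :
    IsGenFlow μD η γ (Q.map fun x => (pathExt x.1, x.2)) := by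
  have hm := measurable_pathExt_prod (n := n)
  have hev : ∀ t : ℝ, Measurable fun p : (ℝ → Euc n) × Euc n => p.1 t := fun t =>
    (measurable_pi_apply t).comp measurable_fst
  have hevq : ∀ q : ℚ, Measurable fun p : (ℚ → Euc n) × Euc n => p.1 q := fun q =>
    (measurable_pi_apply q).comp measurable_fst
  refine ⟨Measure.isProbabilityMeasure_map hm.aemeasurable, fun t ht => ?_, ?_, ?_⟩
  · rw [Measure.map_map (hev t) hm]
    have hmt : Measurable fun x : (ℚ → Euc n) × Euc n => pathExt x.1 t := (hev t).comp hm
    have : IsProbabilityMeasure (Q.map fun x : (ℚ → Euc n) × Euc n => pathExt x.1 t) :=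
      Measure.isProbabilityMeasure_map hmt.aemeasurable
    change Q.map (fun x : (ℚ → Euc n) × Euc n => pathExt x.1 t) = μD
    refine ext_of_forall_integral_eq_of_IsFiniteMeasure fun φ => ?_
    rw [integral_map hmt.aemeasurable φ.continuous.aestronglyMeasurable]
    have hlim : Tendsto (fun N => ∫ x : (ℚ → Euc n) × Euc n, φ (x.1 (apx N t)) ∂Q) atTop
        (nhds (∫ x : (ℚ → Euc n) × Euc n, φ (pathExt x.1 t) ∂Q)) := by
      refine tendsto_integral_of_dominated_convergence (fun _ => ‖φ‖)
        (fun N => (φ.continuous.measurable.comp (hevq _)).aestronglyMeasurable)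
        (integrable_const _) (fun N => Eventually.of_forall fun x => φ.norm_coe_le_norm _) ?_
      filter_upwards [hQ] with x hx
      exact (φ.continuous.tendsto _).comp (tendsto_pathExt hx t)
    have hconst : (fun N => ∫ x : (ℚ → Euc n) × Euc n, φ (x.1 (apx N t)) ∂Q)
        = fun _ => ∫ z, φ z ∂μD := by
      funext N
      rw [← hq _ (apx_mem N t), integral_map (hevq _).aemeasurable
        φ.continuous.aestronglyMeasurable]
    rw [hconst] at hlim
    exact tendsto_nhds_unique hlim tendsto_const_nhds
  · rw [Measure.map_map ((hev 0).prodMk measurable_snd) hm, ← h0]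
    refine Measure.map_congr ?_
    filter_upwards [hQ] with x hx
    have := pathExt_ratCast hx (q := 0) (by norm_num)
    rw [Rat.cast_zero] at this
    simp [this]
  · rw [Measure.map_map ((hev 1).prodMk measurable_snd) hm, ← h1]
    refine Measure.map_congr ?_
    filter_upwards [hQ] with x hx
    have := pathExt_ratCast hx (q := 1) (by norm_num)
    rw [Rat.cast_one] at this
    simp [this]

lemma flowAction_map_pathExt_le {n : ℕ} (Q : Measure ((ℚ → Euc n) × Euc n)) :
    flowAction (Q.map fun x => (pathExt x.1, x.2)) ≤ ∫⁻ x, energy x.1 ∂Q :=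
  (lintegral_map_le _ _).trans (lintegral_mono fun x => pathAction_pathExt_le x.1)

lemma lintegral_energy_map_restr_le {n : ℕ} (P : Measure ((ℝ → Euc n) × Euc n)) :
    ∫⁻ x, energy x.1 ∂(P.map fun p => (restr p.1, p.2)) ≤ flowAction P :=
  (lintegral_map_le _ _).trans (lintegral_mono fun p => energy_restr_le p.1)

/-- Lower semicontinuity of `δ̄` in its second argument: a uniform bound on the actions of flows from
`η` to `γs k` passes to the narrow limit of `γs`. -/
lemma deltaSq_le_of_tendsto {n : ℕ} {D : Set (Euc n)} (hD : IsCompact D)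
    {μD : Measure (Euc n)} [IsProbabilityMeasure μD] (hμD : ∀ᵐ x ∂μD, x ∈ D)
    (F : Ultrafilter ℕ) {η : Measure (Euc n × Euc n)} (hη : IsPlan μD η)
    {γs : ℕ → ProbabilityMeasure (Euc n × Euc n)} {γ : ProbabilityMeasure (Euc n × Euc n)}
    (hγ : Tendsto γs F (nhds γ)) {P : ℕ → Measure ((ℝ → Euc n) × Euc n)}
    (hP : ∀ k, IsGenFlow μD η (γs k) (P k)) {c : ℝ≥0∞} (hc : c < ⊤)
    (hPc : ∀ k, flowAction (P k) ≤ c) : deltaSq μD η γ ≤ c := by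
  have hR := measurable_restr (n := n)
  have hev : ∀ t : ℝ, Measurable fun p : (ℝ → Euc n) × Euc n => p.1 t := fun t =>
    (measurable_pi_apply t).comp measurable_fst
  have hevq : ∀ q : ℚ, Continuous fun p : (ℚ → Euc n) × Euc n => p.1 q := fun q =>
    (continuous_apply q).comp continuous_fst
  have hPprob := fun k => (hP k).1
  let Q : ℕ → ProbabilityMeasure ((ℚ → Euc n) × Euc n) := fun k =>
    ⟨(P k).map fun p => (restr p.1, p.2), Measure.isProbabilityMeasure_map hR.aemeasurable⟩
  have hQm : ∀ k (q : ℚ), (Q k : Measure ((ℚ → Euc n) × Euc n)).map (fun x => x.1 q) = μD := by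
    intro k q
    change ((P k).map _).map _ = _
    rw [Measure.map_map (hevq q).measurable hR]
    exact (hP k).2.1 _ (clamp_mem _)
  have hQ0 : ∀ k, (Q k : Measure ((ℚ → Euc n) × Euc n)).map (fun x => (x.1 0, x.2)) = η := by
    intro k
    change ((P k).map _).map _ = _
    rw [Measure.map_map ((hevq 0).prodMk continuous_snd).measurable hR, ← (hP k).2.2.1]
    congr 1
    funext p
    simp [restr, clamp_eq (t := 0) (by simp)]
  have hQ1 : ∀ k, (Q k : Measure ((ℚ → Euc n) × Euc n)).map (fun x => (x.1 1, x.2)) = γs k := by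
    intro k
    change ((P k).map _).map _ = _
    rw [Measure.map_map ((hevq 1).prodMk continuous_snd).measurable hR, ← (hP k).2.2.2]
    congr 1
    funext p
    simp [restr, clamp_eq (t := 1) (by simp)]
  have hQ2 : ∀ k, (Q k : Measure ((ℚ → Euc n) × Euc n)).map Prod.snd = μD := by
    intro k
    have h := hη.2.2
    rw [← hQ0 k, Measure.map_map measurable_snd
      ((hevq 0).prodMk continuous_snd).measurable] at h
    exact h
  -- all laws live on one compact set, by Tychonoff
  have hK : IsCompact ((Set.pi univ fun _ : ℚ => D) ×ˢ D) :=
    (isCompact_univ_pi fun _ => hD).prod hD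
  have hQK : ∀ k, (Q k : Measure ((ℚ → Euc n) × Euc n))
      ((Set.pi univ fun _ : ℚ => D) ×ˢ D)ᶜ = 0 := by
    intro k
    change ∀ᵐ x ∂(Q k : Measure ((ℚ → Euc n) × Euc n)), x ∈ (Set.pi univ fun _ : ℚ => D) ×ˢ D
    have h1 : ∀ᵐ x ∂(Q k : Measure ((ℚ → Euc n) × Euc n)), ∀ q : ℚ, x.1 q ∈ D :=
      ae_all_iff.2 fun q => ae_of_ae_map (p := fun z => z ∈ D) (hevq q).measurable.aemeasurable
        (by rw [hQm]; exact hμD)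
    have h2 : ∀ᵐ x ∂(Q k : Measure ((ℚ → Euc n) × Euc n)), x.2 ∈ D :=
      ae_of_ae_map (p := fun z => z ∈ D) measurable_snd.aemeasurable (by rw [hQ2]; exact hμD)
    filter_upwards [h1, h2] with x hx1 hx2
    exact ⟨fun q _ => hx1 q, hx2⟩
  obtain ⟨Q', hQ'⟩ := exists_tendsto_of_compact hK hQK F
  have hm : ∀ q : ℚ, (Q' : Measure ((ℚ → Euc n) × Euc n)).map (fun x => x.1 q) = μD := fun q =>
    map_eq_of_tendsto hQ' (νs := fun _ => ⟨μD, inferInstance⟩) (ν := ⟨μD, inferInstance⟩)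
      tendsto_const_nhds (hevq q) (fun k => hQm k q)
  have h0 : (Q' : Measure ((ℚ → Euc n) × Euc n)).map (fun x => (x.1 0, x.2)) = η :=
    map_eq_of_tendsto hQ' (νs := fun _ => ⟨η, hη.1⟩) (ν := ⟨η, hη.1⟩)
      tendsto_const_nhds ((hevq 0).prodMk continuous_snd) hQ0
  have h1 : (Q' : Measure ((ℚ → Euc n) × Euc n)).map (fun x => (x.1 1, x.2)) = γ :=
    map_eq_of_tendsto hQ' hγ ((hevq 1).prodMk continuous_snd) hQ1
  have hE : ∫⁻ x, energy x.1 ∂(Q' : Measure ((ℚ → Euc n) × Euc n)) ≤ c :=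
    lintegral_le_of_tendsto_narrow hQ' (f := fun N x => ENNReal.ofReal (discEnergy N x.1))
      (fun N => ENNReal.continuous_ofReal.comp ((continuous_discEnergy N).comp continuous_fst))
      (fun k => (lintegral_energy_map_restr_le (P k)).trans (hPc k))
  have hfin : ∀ᵐ x ∂(Q' : Measure ((ℚ → Euc n) × Euc n)), energy x.1 < ⊤ :=
    ae_lt_top (measurable_energy.comp measurable_fst) (hE.trans_lt hc).ne
  exact (iInf_le _ ⟨_, isGenFlow_map_pathExt hfin (fun q _ => hm q) h0 h1⟩).trans
    ((flowAction_map_pathExt_le _).trans hE)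

/-! ### Control of Lipschitz integrals -/

/-- Mean endpoint displacement of a flow, estimated through the discrete energy of the trivial
partition of `[0,1]`. -/
lemma sq_lintegral_edist_le {n : ℕ} (P : Measure ((ℝ → Euc n) × Euc n))
    [IsProbabilityMeasure P] :
    (∫⁻ p, edist (p.1 0) (p.1 1) ∂P) ^ 2 ≤ 2 * flowAction P := by
  have hev : ∀ t : ℝ, Measurable fun p : (ℝ → Euc n) × Euc n => p.1 t := fun t =>
    (measurable_pi_apply t).comp measurable_fst
  have h := sq_lintegral_le P _ ((hev 0).edist (hev 1)).aemeasurable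
  rw [measure_univ, one_mul] at h
  refine h.trans ?_
  rw [flowAction, ← lintegral_const_mul' _ _ (by simp)]
  refine lintegral_mono fun p => ?_
  have h1 := discEnergy_restr_le 1 p.1
  have h2 : discEnergy 1 (restr p.1) = ‖p.1 1 - p.1 0‖ ^ 2 / 2 := by
    simp [discEnergy, restr, clamp_eq (t := 0) (by simp), clamp_eq (t := 1) (by simp)]
  rw [h2, ofReal_half_sq] at h1
  change edist (p.1 0) (p.1 1) ^ 2 ≤ 2 * pathAction p.1
  rw [edist_comm, edist_eq_enorm_sub]
  calc ‖p.1 1 - p.1 0‖ₑ ^ 2 = 2 * (‖p.1 1 - p.1 0‖ₑ ^ 2 / 2) := by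
        rw [ENNReal.mul_div_cancel (by simp) (by simp)]
    _ ≤ _ := by gcongr

/-- `δ̄` controls the integrals of Lipschitz functions. The assumption `L ≠ 0` allows the factor to be
moved inside the infimum, which may be `⊤`. -/
lemma sq_enorm_integral_sub_le {n : ℕ} {μD : Measure (Euc n)} {η γ : Measure (Euc n × Euc n)}
    [IsProbabilityMeasure η] [IsProbabilityMeasure γ]
    (f : BoundedContinuousFunction (Euc n × Euc n) ℝ) {L : ℝ≥0} (hL0 : L ≠ 0)
    (hL : LipschitzWith L f) :
    ‖∫ x, f x ∂η - ∫ x, f x ∂γ‖ₑ ^ 2 ≤ 2 * (L : ℝ≥0∞) ^ 2 * deltaSq μD η γ := by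
  rw [deltaSq, ENNReal.mul_iInf_of_ne (by simpa using hL0) (ENNReal.mul_ne_top (by simp) (by simp))]
  refine le_iInf ?_
  rintro ⟨P, hP, -, h0, h1⟩
  have hev : ∀ t : ℝ, Measurable fun p : (ℝ → Euc n) × Euc n => (p.1 t, p.2) := fun t =>
    ((measurable_pi_apply t).comp measurable_fst).prodMk measurable_snd
  have hint : ∀ t : ℝ, Integrable (fun p : (ℝ → Euc n) × Euc n => f (p.1 t, p.2)) P := fun t =>
    (integrable_const ‖f‖).mono' (f.continuous.measurable.comp (hev t)).aestronglyMeasurable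
      (Eventually.of_forall fun p => f.norm_coe_le_norm _)
  have e : ∫ x, f x ∂η - ∫ x, f x ∂γ
      = ∫ p : (ℝ → Euc n) × Euc n, (f (p.1 0, p.2) - f (p.1 1, p.2)) ∂P := by
    rw [integral_sub (hint 0) (hint 1), ← h0, ← h1,
      integral_map (hev 0).aemeasurable f.continuous.aestronglyMeasurable,
      integral_map (hev 1).aemeasurable f.continuous.aestronglyMeasurable]
  have hb : ‖∫ x, f x ∂η - ∫ x, f x ∂γ‖ₑ ≤ L * ∫⁻ p, edist (p.1 0) (p.1 1) ∂P := by
    rw [e, ← lintegral_const_mul' _ _ (by simp)]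
    refine (enorm_integral_le_lintegral_enorm _).trans (lintegral_mono fun p => ?_)
    rw [← edist_eq_enorm_sub]
    refine (hL _ _).trans ?_
    simp [Prod.edist_eq]
  calc _ ≤ (L * ∫⁻ p, edist (p.1 0) (p.1 1) ∂P) ^ 2 := by gcongr
    _ = (L : ℝ≥0∞) ^ 2 * (∫⁻ p, edist (p.1 0) (p.1 1) ∂P) ^ 2 := mul_pow _ _ _
    _ ≤ (L : ℝ≥0∞) ^ 2 * (2 * flowAction P) := by gcongr; exact sq_lintegral_edist_le P
    _ = _ := by ring

/-! ### Completeness and narrow convergence -/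

/-- **`(Γ(D), δ̄)` is a complete metric space and `δ̄`-convergence implies narrow
convergence** (Proposition `propotopo`). -/
theorem deltaSq_complete_and_narrow {n : ℕ} (D : Set (Euc n)) (hD : IsCompact D)
    (μD : Measure (Euc n)) [IsProbabilityMeasure μD] (hμD : ∀ᵐ x ∂μD, x ∈ D) :
    -- completeness: every δ̄-Cauchy sequence of plans converges in δ̄ to a plan
    (∀ γs : ℕ → Measure (Euc n × Euc n), (∀ k, IsPlan μD (γs k)) →
      (∀ ε : ℝ≥0∞, 0 < ε → ∃ N, ∀ j k, N ≤ j → N ≤ k → deltaSq μD (γs j) (γs k) < ε) →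
      ∃ γ : Measure (Euc n × Euc n), IsPlan μD γ ∧
        Tendsto (fun k => deltaSq μD (γs k) γ) atTop (nhds 0)) ∧
    -- δ̄-convergence implies narrow convergence
    (∀ (γs : ℕ → Measure (Euc n × Euc n)) (γ : Measure (Euc n × Euc n)),
      (∀ k, IsPlan μD (γs k)) → IsPlan μD γ →
      Tendsto (fun k => deltaSq μD (γs k) γ) atTop (nhds 0) →
      ∀ f : BoundedContinuousFunction (Euc n × Euc n) ℝ,
        Tendsto (fun k => ∫ x, f x ∂(γs k)) atTop (nhds (∫ x, f x ∂γ))) := by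
  refine ⟨fun γs hγs hcauchy => ?_, fun γs γ hγs hγ hlim f => ?_⟩
  · let F : Ultrafilter ℕ := hyperfilter ℕ
    let g : ℕ → ProbabilityMeasure (Euc n × Euc n) := fun k => ⟨γs k, (hγs k).1⟩
    have hgK : ∀ k, (g k : Measure (Euc n × Euc n)) (D ×ˢ D)ᶜ = 0 := by
      intro k
      change ∀ᵐ x ∂(γs k), x ∈ D ×ˢ D
      have h1 : ∀ᵐ x ∂(γs k), x.1 ∈ D := ae_of_ae_map (p := fun z => z ∈ D)
        measurable_fst.aemeasurable (by rw [(hγs k).2.1]; exact hμD)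
      have h2 : ∀ᵐ x ∂(γs k), x.2 ∈ D := ae_of_ae_map (p := fun z => z ∈ D)
        measurable_snd.aemeasurable (by rw [(hγs k).2.2]; exact hμD)
      filter_upwards [h1, h2] with x hx1 hx2
      exact ⟨hx1, hx2⟩
    obtain ⟨γ, hγ⟩ := exists_tendsto_of_compact (hD.prod hD) hgK F
    refine ⟨γ, ⟨γ.2, ?_, ?_⟩, ?_⟩
    · exact map_eq_of_tendsto hγ (νs := fun _ => ⟨μD, inferInstance⟩) (ν := ⟨μD, inferInstance⟩)
        tendsto_const_nhds continuous_fst (fun k => (hγs k).2.1)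
    · exact map_eq_of_tendsto hγ (νs := fun _ => ⟨μD, inferInstance⟩) (ν := ⟨μD, inferInstance⟩)
        tendsto_const_nhds continuous_snd (fun k => (hγs k).2.2)
    · rw [ENNReal.tendsto_atTop_zero]
      intro ε hε
      obtain ⟨ε', hε'0, hε'⟩ := ENNReal.lt_iff_exists_nnreal_btwn.1 hε
      obtain ⟨N, hN⟩ := hcauchy ε' (by exact_mod_cast hε'0)
      refine ⟨N, fun j hj => le_trans ?_ hε'.le⟩
      have hflow : ∀ k, ∃ P, IsGenFlow μD (γs j) (γs (max k N)) P ∧ flowAction P < ε' := by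
        intro k
        obtain ⟨⟨P, hP⟩, hPε⟩ := iInf_lt_iff.1 (hN j (max k N) hj (le_max_right _ _))
        exact ⟨P, hP, hPε⟩
      choose P hP hPε using hflow
      -- replacing `k` by `max k N` does not affect the limit along `F`
      have hγ' : Tendsto (fun k => g (max k N)) F (nhds γ) := by
        refine hγ.congr' ?_
        have : ∀ᶠ k in (F : Filter ℕ), N ≤ k :=
          Nat.hyperfilter_le_atTop (eventually_ge_atTop N)
        filter_upwards [this] with k hk
        rw [max_eq_left hk]
      exact deltaSq_le_of_tendsto hD hμD F (hγs j) hγ' hP ENNReal.coe_lt_top fun k => (hPε k).le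
  · have := fun k => (hγs k).1
    have := hγ.1
    let g : ℕ → ProbabilityMeasure (Euc n × Euc n) := fun k => ⟨γs k, (hγs k).1⟩
    let g' : ProbabilityMeasure (Euc n × Euc n) := ⟨γ, hγ.1⟩
    suffices h : Tendsto g atTop (nhds g') from
      (ProbabilityMeasure.tendsto_iff_forall_integral_tendsto.1 h) f
    rw [tendsto_iff_forall_lipschitz_integral_tendsto]
    rintro φ hφb ⟨L₀, hL₀⟩
    -- a nonzero Lipschitz constant is needed, as `δ̄` may be infinite
    let L : ℝ≥0 := L₀ + 1
    have hL : LipschitzWith L φ := hL₀.weaken (le_add_of_nonneg_right zero_le_one)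
    let ψ : BoundedContinuousFunction (Euc n × Euc n) ℝ :=
      { toFun := φ, continuous_toFun := hL.continuous, map_bounded' := hφb }
    have hle : ∀ k, ‖∫ x, ψ x ∂(γs k) - ∫ x, ψ x ∂γ‖ₑ ^ 2
        ≤ 2 * (L : ℝ≥0∞) ^ 2 * deltaSq μD (γs k) γ := fun k => sq_enorm_integral_sub_le ψ (by simp [L]) hL
    have h0 : Tendsto (fun k => 2 * (L : ℝ≥0∞) ^ 2 * deltaSq μD (γs k) γ) atTop (nhds 0) := by
      simpa using ENNReal.Tendsto.const_mul hlim
        (Or.inr (ENNReal.mul_ne_top (by simp) (by simp) : 2 * (L : ℝ≥0∞) ^ 2 ≠ ⊤))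
    have h1 := tendsto_of_tendsto_of_tendsto_of_le_of_le tendsto_const_nhds h0
      (fun _ => zero_le) hle
    have h2 := (ENNReal.continuous_rpow_const (y := 1 / 2)).tendsto 0 |>.comp h1
    rw [tendsto_iff_edist_tendsto_0]
    simp only [edist_eq_enorm_sub]
    refine (h2.congr fun k => ?_).trans (by simp)
    change (‖∫ x, ψ x ∂(γs k) - ∫ x, ψ x ∂γ‖ₑ ^ 2) ^ (1 / 2 : ℝ) = _
    rw [← ENNReal.rpow_natCast, ← ENNReal.rpow_mul]
    norm_num
    rfl
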